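/- Let X and Y be real random variables with X ≥ 0 a.s. and Y ≥ 0 a.s. Then h(Y) − h(X) ≥ E[h′(X)·(Y − X)], where the right-hand side is a well-defined element of [−∞, ∞) since h′(X) ≤ 0 a.s. -/

import Mathlib

/-!
Fix `a ∈ [a₀, a₁]` and let `q_X = e^{-aX} / E[e^{-aX}]`, a probability density.  With
`d = h_a(Y) - h_a(X)` one has `q_Y = q_X e^t` for `t = -a (Y - X) - a d`, so the elementary
inequality `1 + t ≤ e^t` gives the pointwise bound
`-q_X (Y - X) ≤ (d - 1/a) q_X + (1/a) q_Y` (`tilted_mul_sub_le`).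
Its right-hand side is bounded on `[a₀, a₁] × {X ≥ 0, Y ≥ 0}` and has expectation exactly `d`
(`integral_majorant`).  Integrating over `a` and using Fubini, `h′(X) (Y - X)` lies below an
integrable random variable with expectation `h(Y) - h(X)`.  No integrability of
`h′(X) (Y - X)` itself is needed: the extended expectation is monotone (`eint_le_of_ae_le`).
-/

open MeasureTheory Filter Set
open scoped ENNReal

noncomputable section

variable {Ω : Type*} [MeasurableSpace Ω]

/-- Entropic risk measure `h_a(X) = (1/a) log E[e^{-aX}]`. -/
def entropic (P : Measure Ω) (a : ℝ) (X : Ω → ℝ) : ℝ :=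
  (1 / a) * Real.log (∫ ω, Real.exp (-a * X ω) ∂P)

/-- Weighted entropic risk measure `h(X) = ∫_{[a₀,a₁]} h_a(X) m(da)`. -/
def werm (P : Measure Ω) (m : Measure ℝ) (a₀ a₁ : ℝ) (X : Ω → ℝ) : ℝ :=
  ∫ a in Set.Icc a₀ a₁, entropic P a X ∂m

/-- Marginal risk density transform `h′(X) = -∫_{[a₀,a₁]} e^{-aX}/E[e^{-aX}] m(da)`. -/
def hprime (P : Measure Ω) (m : Measure ℝ) (a₀ a₁ : ℝ) (X : Ω → ℝ) (ω : Ω) : ℝ :=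
  -∫ a in Set.Icc a₀ a₁, Real.exp (-a * X ω) / (∫ ω', Real.exp (-a * X ω') ∂P) ∂m

/-- Extended-real-valued expectation `E[f] = ∫ f⁺ - ∫ f⁻ ∈ [-∞,∞]`. -/
def eint (P : Measure Ω) (f : Ω → ℝ) : EReal :=
  ((∫⁻ ω, ENNReal.ofReal (f ω) ∂P : ℝ≥0∞) : EReal)
    - ((∫⁻ ω, ENNReal.ofReal (-(f ω)) ∂P : ℝ≥0∞) : EReal)

/-- `E[ρX] ∈ [0,∞]` for a nonnegative payoff. -/
def budget (P : Measure Ω) (ρ X : Ω → ℝ) : ℝ≥0∞ := ∫⁻ ω, ENNReal.ofReal (ρ ω * X ω) ∂P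

/-- `X ∈ L⁰₊`: a nonnegative random variable. -/
def Lpos (P : Measure Ω) (X : Ω → ℝ) : Prop := Measurable X ∧ ∀ᵐ ω ∂P, 0 ≤ X ω

/-- Objective of the Lagrangian risk-minimization problem: `h(X) + λ E[ρX]`. -/
def robj (P : Measure Ω) (m : Measure ℝ) (a₀ a₁ : ℝ) (ρ : Ω → ℝ) (lam : ℝ) (X : Ω → ℝ) : EReal :=
  ((werm P m a₀ a₁ X : ℝ) : EReal) + (lam : EReal) * ((budget P ρ X : ℝ≥0∞) : EReal)

/-- `ψ_X(y) = ∫_{[a₀,a₁]} e^{-ay} / E[e^{-aX}] m(da)`. -/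
def psi (P : Measure Ω) (m : Measure ℝ) (a₀ a₁ : ℝ) (X : Ω → ℝ) (y : ℝ) : ℝ :=
  ∫ a in Set.Icc a₀ a₁, Real.exp (-a * y) / (∫ ω, Real.exp (-a * X ω) ∂P) ∂m

/-- Inverse of `ψ_X` on `(0,∞)` (realized via `sSup`, since `ψ_X` is continuous, strictly
decreasing with limits `∞` at `-∞` and `0` at `∞`). -/
def psiInv (P : Measure Ω) (m : Measure ℝ) (a₀ a₁ : ℝ) (X : Ω → ℝ) (z : ℝ) : ℝ :=
  sSup {y : ℝ | z ≤ psi P m a₀ a₁ X y}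

/-- The transform `𝐓X = max(ψ_X⁻¹(λρ), 0)`. -/
def Ttrans (P : Measure Ω) (m : Measure ℝ) (a₀ a₁ lam : ℝ) (ρ : Ω → ℝ) (X : Ω → ℝ) : Ω → ℝ :=
  fun ω => max (psiInv P m a₀ a₁ X (lam * ρ ω)) 0

/-- `X ∈ 𝒳(x)`: nonnegative and `E[ρX] ≤ x`. -/
def feasible (P : Measure Ω) (ρ : Ω → ℝ) (x : ℝ) (X : Ω → ℝ) : Prop :=
  Lpos P X ∧ budget P ρ X ≤ ENNReal.ofReal x

/-- `γ₁(x)`: the minimal value of `h` over `𝒳(x)`. -/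
def gamma1 (P : Measure Ω) (m : Measure ℝ) (a₀ a₁ : ℝ) (ρ : Ω → ℝ) (x : ℝ) : ℝ :=
  sInf (werm P m a₀ a₁ '' {X | feasible P ρ x X})

/-- Expected utility `E[U(X)] ∈ [-∞,∞]`. -/
def eutil (P : Measure Ω) (U : ℝ → ℝ) (X : Ω → ℝ) : EReal := eint P (fun ω => U (X ω))

/-- Full Lagrangian objective `E[U(X)] - μ h(X) - λ E[ρX]`. -/
def fullObj (P : Measure Ω) (m : Measure ℝ) (a₀ a₁ : ℝ) (ρ : Ω → ℝ) (U : ℝ → ℝ)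
    (μ lam : ℝ) (X : Ω → ℝ) : EReal :=
  eutil P U X - ((μ * werm P m a₀ a₁ X : ℝ) : EReal)
    - (lam : EReal) * ((budget P ρ X : ℝ≥0∞) : EReal)

/-- The function `f` need not be measurable or integrable: only monotonicity of the two lower
integrals defining `eint` is used, and the integrable bound `g` excludes `⊤ - ⊤`. -/
lemma eint_le_of_ae_le {P : Measure Ω} {f g : Ω → ℝ} (hg : Integrable g P)
    (hfg : ∀ᵐ ω ∂P, f ω ≤ g ω) : eint P f ≤ ((∫ ω, g ω ∂P : ℝ) : EReal) := by
  have h1 : ∫⁻ ω, ENNReal.ofReal (g ω) ∂P ≠ ⊤ := hg.lintegral_lt_top.ne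
  have h2 : ∫⁻ ω, ENNReal.ofReal (-(g ω)) ∂P ≠ ⊤ := hg.neg.lintegral_lt_top.ne
  have key : ((∫ ω, g ω ∂P : ℝ) : EReal) = eint P g := by
    rw [integral_eq_lintegral_pos_part_sub_lintegral_neg_part hg, eint, EReal.coe_sub,
      EReal.coe_ennreal_toReal h1, EReal.coe_ennreal_toReal h2]
  rw [key]
  refine EReal.sub_le_sub ?_ ?_
  · refine EReal.coe_ennreal_le_coe_ennreal_iff.2 (lintegral_mono_ae ?_)
    filter_upwards [hfg] with ω h using ENNReal.ofReal_le_ofReal h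
  · refine EReal.coe_ennreal_le_coe_ennreal_iff.2 (lintegral_mono_ae ?_)
    filter_upwards [hfg] with ω h using ENNReal.ofReal_le_ofReal (neg_le_neg h)

/-- The Laplace transform `E[e^{-aX}]`. -/
def laplace (P : Measure Ω) (X : Ω → ℝ) (a : ℝ) : ℝ := ∫ ω, Real.exp (-a * X ω) ∂P

/-- The density `e^{-aX} / E[e^{-aX}]` of the exponentially tilted measure. -/
def tilted (P : Measure Ω) (X : Ω → ℝ) (a : ℝ) (ω : Ω) : ℝ :=
  Real.exp (-a * X ω) / laplace P X a

/-- For fixed `a`, the integrable upper bound for `-tilted P X a * (Y - X)`. -/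
def majorant (P : Measure Ω) (X Y : Ω → ℝ) (a : ℝ) (ω : Ω) : ℝ :=
  (entropic P a Y - entropic P a X - 1 / a) * tilted P X a ω + 1 / a * tilted P Y a ω

section OneVariable

variable {P : Measure Ω} [IsProbabilityMeasure P] {X : Ω → ℝ}

lemma integrable_exp_neg_mul (hmX : Measurable X) (hX0 : ∀ᵐ ω ∂P, 0 ≤ X ω) {a : ℝ}
    (ha : 0 ≤ a) : Integrable (fun ω => Real.exp (-a * X ω)) P := by
  refine Integrable.of_bound (by fun_prop) 1 ?_
  filter_upwards [hX0] with ω h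
  rw [Real.norm_eq_abs, abs_of_pos (Real.exp_pos _), Real.exp_le_one_iff]
  nlinarith [mul_nonneg ha h]

lemma laplace_pos (hmX : Measurable X) (hX0 : ∀ᵐ ω ∂P, 0 ≤ X ω) {a : ℝ} (ha : 0 ≤ a) :
    0 < laplace P X a :=
  integral_exp_pos (integrable_exp_neg_mul hmX hX0 ha)

lemma laplace_antitone (hmX : Measurable X) (hX0 : ∀ᵐ ω ∂P, 0 ≤ X ω) {a b : ℝ} (ha : 0 ≤ a)
    (hab : a ≤ b) : laplace P X b ≤ laplace P X a := by
  refine integral_mono_ae (integrable_exp_neg_mul hmX hX0 (ha.trans hab))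
    (integrable_exp_neg_mul hmX hX0 ha) ?_
  filter_upwards [hX0] with ω h
  refine Real.exp_le_exp.2 ?_
  nlinarith

lemma laplace_le_one (hmX : Measurable X) (hX0 : ∀ᵐ ω ∂P, 0 ≤ X ω) {a : ℝ} (ha : 0 ≤ a) :
    laplace P X a ≤ 1 := by
  simpa [laplace] using laplace_antitone (P := P) hmX hX0 le_rfl ha

lemma measurable_laplace (hmX : Measurable X) : Measurable (laplace P X) := by
  have : StronglyMeasurable (fun p : ℝ × Ω => Real.exp (-p.1 * X p.2)) :=
    Measurable.stronglyMeasurable (by fun_prop)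
  exact this.integral_prod_right.measurable

lemma measurable_entropic (hmX : Measurable X) : Measurable (fun a => entropic P a X) := by
  have := measurable_laplace (P := P) hmX
  change Measurable (fun a => (1 / a) * Real.log (laplace P X a))
  fun_prop

lemma measurable_tilted (hmX : Measurable X) :
    Measurable (fun p : ℝ × Ω => tilted P X p.1 p.2) := by
  have := measurable_laplace (P := P) hmX
  unfold tilted
  fun_prop

lemma abs_entropic_le (hmX : Measurable X) (hX0 : ∀ᵐ ω ∂P, 0 ≤ X ω) {a₀ a₁ a : ℝ}
    (ha₀ : 0 < a₀) (ha : a ∈ Icc a₀ a₁) :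
    |entropic P a X| ≤ 1 / a₀ * -Real.log (laplace P X a₁) := by
  have hapos : 0 < a := ha₀.trans_le ha.1
  have h0 := laplace_pos hmX hX0 (hapos.le.trans ha.2)
  have h1 := laplace_antitone hmX hX0 hapos.le ha.2
  have h2 := Real.log_le_log h0 h1
  have h3 := Real.log_nonpos (laplace_pos hmX hX0 hapos.le).le (laplace_le_one hmX hX0 hapos.le)
  change |(1 / a) * Real.log (laplace P X a)| ≤ _
  rw [abs_mul, abs_of_nonpos h3, abs_of_pos (by positivity)]
  exact mul_le_mul (one_div_le_one_div_of_le ha₀ ha.1) (neg_le_neg h2) (by linarith)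
    (by positivity)

lemma abs_tilted_le (hmX : Measurable X) (hX0 : ∀ᵐ ω ∂P, 0 ≤ X ω) {a₁ a : ℝ}
    (ha0 : 0 ≤ a) (ha : a ≤ a₁) {ω : Ω} (hω : 0 ≤ X ω) :
    |tilted P X a ω| ≤ 1 / laplace P X a₁ := by
  have h0 := laplace_pos hmX hX0 (ha0.trans ha)
  have h1 := laplace_antitone hmX hX0 ha0 ha
  have h2 : 0 < laplace P X a := h0.trans_le h1
  unfold tilted
  rw [abs_of_pos (by positivity)]
  refine div_le_div₀ zero_le_one ?_ h0 h1
  rw [Real.exp_le_one_iff]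
  nlinarith [mul_nonneg ha0 hω]

lemma integrable_tilted (hmX : Measurable X) (hX0 : ∀ᵐ ω ∂P, 0 ≤ X ω) {a : ℝ} (ha : 0 ≤ a) :
    Integrable (tilted P X a) P :=
  (integrable_exp_neg_mul hmX hX0 ha).div_const _

lemma integral_tilted (hmX : Measurable X) (hX0 : ∀ᵐ ω ∂P, 0 ≤ X ω) {a : ℝ} (ha : 0 ≤ a) :
    ∫ ω, tilted P X a ω ∂P = 1 := by
  unfold tilted
  rw [integral_div]
  exact div_self (laplace_pos hmX hX0 ha).ne'

lemma integrable_entropic (hmX : Measurable X) (hX0 : ∀ᵐ ω ∂P, 0 ≤ X ω) {a₀ a₁ : ℝ}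
    (ha₀ : 0 < a₀) (m : Measure ℝ) [IsFiniteMeasure m] :
    Integrable (fun a => entropic P a X) (m.restrict (Icc a₀ a₁)) := by
  refine Integrable.of_bound (measurable_entropic hmX).aestronglyMeasurable
    (1 / a₀ * -Real.log (laplace P X a₁)) ?_
  filter_upwards [ae_restrict_mem measurableSet_Icc] with a ha
  exact abs_entropic_le hmX hX0 ha₀ ha

lemma integrable_tilted_left (hmX : Measurable X) (hX0 : ∀ᵐ ω ∂P, 0 ≤ X ω) {a₀ a₁ : ℝ}
    (ha₀ : 0 < a₀) (m : Measure ℝ) [IsFiniteMeasure m] {ω : Ω} (hω : 0 ≤ X ω) :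
    Integrable (fun a => tilted P X a ω) (m.restrict (Icc a₀ a₁)) := by
  refine Integrable.of_bound
    ((measurable_tilted (P := P) hmX).comp measurable_prodMk_right).aestronglyMeasurable
    (1 / laplace P X a₁) ?_
  filter_upwards [ae_restrict_mem measurableSet_Icc] with a ha
  exact abs_tilted_le hmX hX0 (ha₀.le.trans ha.1) ha.2 hω

end OneVariable

section TwoVariables

variable {P : Measure Ω} [IsProbabilityMeasure P] {X Y : Ω → ℝ}

lemma tilted_mul_sub_le (hmX : Measurable X) (hX0 : ∀ᵐ ω ∂P, 0 ≤ X ω)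
    (hmY : Measurable Y) (hY0 : ∀ᵐ ω ∂P, 0 ≤ Y ω) {a : ℝ} (ha : 0 < a) (ω : Ω) :
    -(tilted P X a ω * (Y ω - X ω)) ≤ majorant P X Y a ω := by
  have hF := laplace_pos hmX hX0 ha.le
  have hG := laplace_pos hmY hY0 ha.le
  set t : ℝ := -a * (Y ω - X ω) - a * (entropic P a Y - entropic P a X) with ht
  have hqX : 0 < tilted P X a ω := div_pos (Real.exp_pos _) hF
  have hq : tilted P Y a ω = tilted P X a ω * Real.exp t := by
    have hat : t = -a * Y ω - -a * X ω - (Real.log (laplace P Y a) - Real.log (laplace P X a)) := by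
      simp only [ht, entropic, laplace]
      field_simp
      ring
    rw [hat, Real.exp_sub, Real.exp_sub, Real.exp_sub, Real.exp_log hF, Real.exp_log hG]
    unfold tilted
    field_simp
  have hexp : 0 ≤ 1 / a * (Real.exp t - (t + 1)) :=
    mul_nonneg (by positivity) (sub_nonneg.2 (Real.add_one_le_exp t))
  have hid : majorant P X Y a ω - -(tilted P X a ω * (Y ω - X ω))
      = tilted P X a ω * (1 / a * (Real.exp t - (t + 1))) := by
    rw [majorant, hq]
    generalize Real.exp t = e
    rw [ht]
    field_simp
    ring
  have := mul_nonneg hqX.le hexp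
  linarith

lemma integral_majorant (hmX : Measurable X) (hX0 : ∀ᵐ ω ∂P, 0 ≤ X ω)
    (hmY : Measurable Y) (hY0 : ∀ᵐ ω ∂P, 0 ≤ Y ω) {a : ℝ} (ha : 0 ≤ a) :
    ∫ ω, majorant P X Y a ω ∂P = entropic P a Y - entropic P a X := by
  unfold majorant
  rw [integral_add ((integrable_tilted hmX hX0 ha).const_mul _)
    ((integrable_tilted hmY hY0 ha).const_mul _), integral_const_mul, integral_const_mul,
    integral_tilted hmX hX0 ha, integral_tilted hmY hY0 ha]
  ring

lemma integrable_majorant_prod (hmX : Measurable X) (hX0 : ∀ᵐ ω ∂P, 0 ≤ X ω)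
    (hmY : Measurable Y) (hY0 : ∀ᵐ ω ∂P, 0 ≤ Y ω) {a₀ a₁ : ℝ} (ha₀ : 0 < a₀)
    (m : Measure ℝ) [IsFiniteMeasure m] :
    Integrable (fun p : ℝ × Ω => majorant P X Y p.1 p.2) ((m.restrict (Icc a₀ a₁)).prod P) := by
  have mX := measurable_tilted (P := P) hmX
  have mY := measurable_tilted (P := P) hmY
  have eX : Measurable (fun p : ℝ × Ω => entropic P p.1 X) :=
    (measurable_entropic hmX).comp measurable_fst
  have eY : Measurable (fun p : ℝ × Ω => entropic P p.1 Y) :=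
    (measurable_entropic hmY).comp measurable_fst
  refine Integrable.of_bound (Measurable.aestronglyMeasurable
    (((eY.sub eX).sub (measurable_fst.const_div 1)).mul mX |>.add
      ((measurable_fst.const_div 1).mul mY)))
    ((1 / a₀ * -Real.log (laplace P Y a₁) + 1 / a₀ * -Real.log (laplace P X a₁) + 1 / a₀)
      * (1 / laplace P X a₁) + 1 / a₀ * (1 / laplace P Y a₁)) ?_
  have hae : ∀ᵐ a ∂(m.restrict (Icc a₀ a₁)), a ∈ Icc a₀ a₁ := ae_restrict_mem measurableSet_Icc
  filter_upwards [Measure.quasiMeasurePreserving_fst.ae hae,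
    Measure.quasiMeasurePreserving_snd.ae hX0, Measure.quasiMeasurePreserving_snd.ae hY0]
    with p ha hX hY
  have hap : 0 < p.1 := ha₀.trans_le ha.1
  have b1 := abs_entropic_le hmX hX0 ha₀ ha
  have b2 := abs_entropic_le hmY hY0 ha₀ ha
  have b3 := abs_tilted_le hmX hX0 hap.le ha.2 hX
  have b4 := abs_tilted_le hmY hY0 hap.le ha.2 hY
  have b5 : |1 / p.1| ≤ 1 / a₀ := by
    rw [abs_of_pos (by positivity)]
    exact one_div_le_one_div_of_le ha₀ ha.1
  have b6 : |entropic P p.1 Y - entropic P p.1 X - 1 / p.1| ≤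
      1 / a₀ * -Real.log (laplace P Y a₁) + 1 / a₀ * -Real.log (laplace P X a₁) + 1 / a₀ :=
    (abs_sub _ _).trans (add_le_add ((abs_sub _ _).trans (add_le_add b2 b1)) b5)
  rw [Real.norm_eq_abs]
  refine (abs_add_le _ _).trans (add_le_add ?_ ?_)
  · rw [abs_mul]
    exact mul_le_mul b6 b3 (abs_nonneg _) ((abs_nonneg _).trans b6)
  · rw [abs_mul]
    exact mul_le_mul b5 b4 (abs_nonneg _) ((abs_nonneg _).trans b5)

end TwoVariables

/-- the gradient inequality `h(Y) - h(X) ≥ E[h′(X)(Y-X)]` for nonnegative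
`X, Y`, where the expectation is a well-defined element of `[-∞,∞)` (encoded in `EReal`). -/
theorem werm_gradient_inequality (P : Measure Ω) [IsProbabilityMeasure P]
    (a₀ a₁ : ℝ) (ha₀ : 0 < a₀) (ha₀₁ : a₀ < a₁)
    (m : Measure ℝ) [IsProbabilityMeasure m] (hm : m (Set.Icc a₀ a₁) = 1)
    (X Y : Ω → ℝ) (hmX : Measurable X) (hX0 : ∀ᵐ ω ∂P, 0 ≤ X ω)
    (hmY : Measurable Y) (hY0 : ∀ᵐ ω ∂P, 0 ≤ Y ω) :
    eint P (fun ω => hprime P m a₀ a₁ X ω * (Y ω - X ω))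
      ≤ ((werm P m a₀ a₁ Y - werm P m a₀ a₁ X : ℝ) : EReal) ∧
    eint P (fun ω => hprime P m a₀ a₁ X ω * (Y ω - X ω)) < (⊤ : EReal) := by
  suffices h : eint P (fun ω => hprime P m a₀ a₁ X ω * (Y ω - X ω))
      ≤ ((werm P m a₀ a₁ Y - werm P m a₀ a₁ X : ℝ) : EReal) from
    ⟨h, h.trans_lt (EReal.coe_lt_top _)⟩
  have hint := integrable_majorant_prod hmX hX0 hmY hY0 (a₁ := a₁) ha₀ m
  have hval : ∫ ω, ∫ a in Icc a₀ a₁, majorant P X Y a ω ∂m ∂P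
      = werm P m a₀ a₁ Y - werm P m a₀ a₁ X := by
    rw [← integral_integral_swap hint, werm, werm,
      ← integral_sub (integrable_entropic hmY hY0 ha₀ m) (integrable_entropic hmX hX0 ha₀ m)]
    refine setIntegral_congr_fun measurableSet_Icc fun a ha => ?_
    exact integral_majorant hmX hX0 hmY hY0 (ha₀.le.trans ha.1)
  rw [← hval]
  refine eint_le_of_ae_le hint.integral_prod_right ?_
  filter_upwards [hX0, hint.prod_left_ae] with ω hω hk
  have hprime_mul : hprime P m a₀ a₁ X ω * (Y ω - X ω)
      = ∫ a in Icc a₀ a₁, -(tilted P X a ω * (Y ω - X ω)) ∂m := by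
    rw [integral_neg, integral_mul_const, hprime, neg_mul]
    rfl
  rw [hprime_mul]
  refine integral_mono_ae ((integrable_tilted_left hmX hX0 ha₀ m hω).mul_const _).neg hk ?_
  filter_upwards [ae_restrict_mem measurableSet_Icc] with a ha
  exact tilted_mul_sub_le hmX hX0 hmY hY0 (ha₀.trans_le ha.1) ω
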